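/- arXiv:2410.03467 — 4 statements merged into one kernel-verified Lean document; each statement's English description precedes it below -/
import Mathlib

section
/- Let n be a positive integer and let F be a field whose characteristic is 0 or an odd rational prime p with gcd(n,p) = 1. Then the F-vector space Der_F(F V_{8n}) of F-derivations of the group algebra F V_{8n} has dimension 3(2n−1) over F if n is odd, and dimension 6(n−1) over F if n is even. -/
/-- The relators of the presentation
`V_{8n} = ⟨a, b ∣ a^{2n} = b⁴ = 1, (ba)² = 1, (b⁻¹a)² = 1⟩`,
where `a` is the generator indexed by `0` and `b` the one indexed by `1`.
(The relations `ba = a⁻¹b⁻¹` and `b⁻¹a = a⁻¹b` are equivalent to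
`(ba)² = 1` and `(b⁻¹a)² = 1` respectively.) -/
def V8nRels (n : ℕ) : Set (FreeGroup (Fin 2)) :=
  {(FreeGroup.of 0) ^ (2 * n), (FreeGroup.of 1) ^ 4,
   (FreeGroup.of 1 * FreeGroup.of 0) ^ 2,
   ((FreeGroup.of 1)⁻¹ * FreeGroup.of 0) ^ 2}

/-- The group `V_{8n}` of order `8n`. -/
abbrev V8n (n : ℕ) : Type := PresentedGroup (V8nRels n)

/-- The generator `a` of `V_{8n}`. -/
def aV (n : ℕ) : V8n n := PresentedGroup.of 0

/-- The generator `b` of `V_{8n}`. -/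
def bV (n : ℕ) : V8n n := PresentedGroup.of 1
/-- The `F`-vector space of `F`-derivations of an `F`-algebra `A`,
realized as the `F`-linear endomorphisms of `A` satisfying the Leibniz rule. -/
def fDerivations (F : Type*) [CommSemiring F] (A : Type*) [Ring A] [Algebra F A] :
    Submodule F (A →ₗ[F] A) where
  carrier := {d | ∀ x y : A, d (x * y) = d x * y + x * d y}
  zero_mem' := by intro x y; simp
  add_mem' := by
    intro d e hd he x y
    simp only [LinearMap.add_apply, hd x y, he x y, add_mul, mul_add]
    abel
  smul_mem' := by
    intro c d hd x y
    simp only [LinearMap.smul_apply, hd x y, smul_add, smul_mul_assoc, mul_smul_comm]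

section DerivGeneral

variable (F G : Type*) [Field F] [Group G]

/-- The inner derivation map. -/
noncomputable def adMap : MonoidAlgebra F G →ₗ[F] fDerivations F (MonoidAlgebra F G) where
  toFun x := ⟨LinearMap.mulLeft F x - LinearMap.mulRight F x, by
    intro y z
    simp only [LinearMap.sub_apply, LinearMap.mulLeft_apply, LinearMap.mulRight_apply]
    noncomm_ring⟩
  map_add' x y := by
    ext1
    apply LinearMap.ext
    intro z
    simp only [Submodule.coe_add, LinearMap.add_apply, LinearMap.sub_apply,
      LinearMap.mulLeft_apply, LinearMap.mulRight_apply]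
    noncomm_ring
  map_smul' c x := by
    ext1
    apply LinearMap.ext
    intro z
    simp [smul_sub]

theorem adMap_apply (x y : MonoidAlgebra F G) :
    (adMap F G x : MonoidAlgebra F G →ₗ[F] MonoidAlgebra F G) y = x * y - y * x := rfl

theorem adMap_surjective [Fintype G] (h : (Fintype.card G : F) ≠ 0) :
    Function.Surjective (adMap F G) := by
  rintro ⟨d, hd⟩
  refine ⟨(Fintype.card G : F)⁻¹ • ∑ g : G,
    d (MonoidAlgebra.single g 1) * MonoidAlgebra.single g⁻¹ 1, ?_⟩
  ext1
  apply (MonoidAlgebra.basis G F).ext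
  intro k
  rw [adMap_apply]
  simp only [MonoidAlgebra.basis_apply]
  have hd' : ∀ x y, d (x * y) = d x * y + x * d y := hd
  have key : MonoidAlgebra.single k (1 : F) * ∑ g : G,
      d (MonoidAlgebra.single g 1) * MonoidAlgebra.single g⁻¹ 1 =
      (∑ g : G, d (MonoidAlgebra.single g 1) * MonoidAlgebra.single g⁻¹ 1) *
        MonoidAlgebra.single k 1 - (Fintype.card G : F) • d (MonoidAlgebra.single k 1) := by
    rw [← Equiv.sum_comp (Equiv.mulLeft k)
      (fun g => d (MonoidAlgebra.single g 1) * MonoidAlgebra.single g⁻¹ (1 : F)),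
      Finset.sum_mul]
    have : (Fintype.card G : F) • d (MonoidAlgebra.single k 1)
        = ∑ g : G, d (MonoidAlgebra.single k (1 : F)) := by
      simp [Finset.sum_const, Finset.card_univ, Nat.cast_smul_eq_nsmul]
    rw [this, ← Finset.sum_sub_distrib, Equiv.sum_comp (Equiv.mulLeft k)
      (fun g => d (MonoidAlgebra.single g 1) * MonoidAlgebra.single g⁻¹ (1 : F)), Finset.mul_sum]
    refine Finset.sum_congr rfl fun g _ => ?_
    have h1 : MonoidAlgebra.single (k * g) (1 : F)
      = MonoidAlgebra.single k 1 * MonoidAlgebra.single g 1 := by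
      simp [MonoidAlgebra.single_mul_single]
    simp only [Equiv.coe_mulLeft]
    rw [h1, hd', mul_assoc _ _ (MonoidAlgebra.single k 1), MonoidAlgebra.single_mul_single]
    simp only [mul_inv_rev, inv_mul_cancel_right, mul_one, add_mul, mul_assoc,
      MonoidAlgebra.single_mul_single, mul_inv_cancel]
    simp [← MonoidAlgebra.one_def]
  rw [mul_smul_comm, key, smul_mul_assoc, ← smul_sub]
  rw [sub_sub_cancel, smul_smul, inv_mul_cancel₀ h, one_smul]

/-- Class functions to the group algebra. -/
noncomputable def classMap [Fintype G] : (ConjClasses G → F) →ₗ[F] MonoidAlgebra F G where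
  toFun f := .ofCoeff (Finsupp.equivFunOnFinite.symm fun g => f (ConjClasses.mk g))
  map_add' f g := by ext; simp
  map_smul' c f := by ext; simp

theorem classMap_coeff [Fintype G] (f : ConjClasses G → F) (g : G) :
    (classMap F G f).coeff g = f (ConjClasses.mk g) := rfl

theorem range_classMap [Fintype G] :
    LinearMap.range (classMap F G) = LinearMap.ker (adMap F G) := by
  have hker : ∀ x, x ∈ LinearMap.ker (adMap F G) ↔
      ∀ g k : G, x.coeff (k * g⁻¹) = x.coeff (g⁻¹ * k) := by
    intro x
    rw [LinearMap.mem_ker, ← Subtype.coe_inj]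
    constructor
    · intro h g k
      have := congrArg (fun d => (d (MonoidAlgebra.single g 1)).coeff k) h
      simpa [adMap_apply, sub_eq_zero] using this
    · intro h
      apply (MonoidAlgebra.basis G F).ext
      intro g
      rw [adMap_apply]
      ext k
      simp [h g k]
  ext x
  rw [hker]
  constructor
  · rintro ⟨f, rfl⟩ g k
    simp only [classMap_coeff]
    congr 1
    rw [ConjClasses.mk_eq_mk_iff_isConj, isConj_iff]
    exact ⟨g⁻¹, by group⟩
  · intro h
    refine ⟨fun c => Quotient.liftOn c (fun g => x.coeff g) ?_, ?_⟩
    · intro a b hab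
      obtain ⟨c, rfl⟩ := isConj_iff.1 hab
      have := h c (c * a)
      simpa using this.symm
    · ext g
      rfl

theorem finrank_fDerivations [Fintype G] (h : (Fintype.card G : F) ≠ 0) :
    Module.finrank F (fDerivations F (MonoidAlgebra F G)) + Nat.card (ConjClasses G)
      = Nat.card G := by
  classical
  have : Module.Finite F (MonoidAlgebra F G) := .of_basis (MonoidAlgebra.basis G F)
  have h1 := LinearMap.finrank_range_add_finrank_ker (K := F) (V := MonoidAlgebra F G)
    (V₂ := fDerivations F (MonoidAlgebra F G)) (adMap F G)
  rw [LinearMap.range_eq_top.2 (adMap_surjective F G h), finrank_top, ← range_classMap,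
    LinearMap.finrank_range_of_inj, Module.finrank_eq_card_basis (MonoidAlgebra.basis G F)] at h1
  · have : Fintype (ConjClasses G) := Fintype.ofFinite _
    rw [Module.finrank_fintype_fun_eq_card] at h1
    simpa using h1
  · intro f f' hff
    funext c
    induction c using Quotient.inductionOn with
    | _ g => exact congrArg (fun x => x.coeff g) hff

end DerivGeneral

section Model

/-- Underlying abelian normal subgroup of the model. -/
abbrev VN (n : ℕ) : Type := ZMod (2 * n) × ZMod 2

/-- Reduction mod two. -/
def redTwo (n : ℕ) : ZMod (2 * n) →+* ZMod 2 := ZMod.castHom (Dvd.intro n rfl) (ZMod 2)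

/-- The twisted inversion. -/
def phiN (n : ℕ) : VN n →+ VN n where
  toFun x := (-x.1, x.2 + redTwo n x.1)
  map_zero' := by simp
  map_add' x y := by
    ext
    · simp; ring
    · simp; ring

theorem zmod2_add_self (x : ZMod 2) : x + x = 0 := by revert x; decide

theorem zmod2_neg (x : ZMod 2) : -x = x := by revert x; decide

theorem phiN_phiN (n : ℕ) (x : VN n) : phiN n (phiN n x) = x := by
  ext
  · simp [phiN]
  · simp [phiN, add_assoc, zmod2_add_self]

/-- The central involution. -/
def zN (n : ℕ) : VN n := (0, 1)

theorem phiN_zN (n : ℕ) : phiN n (zN n) = zN n := by simp [phiN, zN]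

theorem zN_add_zN (n : ℕ) : zN n + zN n = 0 := by
  ext
  · simp [zN]
  · exact zmod2_add_self 1

/-- The concrete model. -/
def VM (n : ℕ) : Type := VN n × Bool

/-- Multiplication of the model. -/
def VM.mul {n : ℕ} : VM n → VM n → VM n
  | (x, false), (y, s) => (x + y, s)
  | (x, true), (y, false) => (x + phiN n y, true)
  | (x, true), (y, true) => (x + phiN n y + zN n, false)

/-- Inverse of the model. -/
def VM.inv {n : ℕ} : VM n → VM n
  | (x, false) => (-x, false)
  | (x, true) => (-phiN n x + zN n, true)

instance (n : ℕ) : Mul (VM n) := ⟨VM.mul⟩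
instance (n : ℕ) : One (VM n) := ⟨((0, false) : VN n × Bool)⟩
instance (n : ℕ) : Inv (VM n) := ⟨VM.inv⟩

/-- Constructor. -/
def VM.mk {n : ℕ} (x : VN n) (t : Bool) : VM n := (x, t)

theorem VM.mul_ff {n : ℕ} (x y : VN n) (s : Bool) :
    VM.mk x false * VM.mk y s = VM.mk (x + y) s := rfl
theorem VM.mul_tf {n : ℕ} (x y : VN n) :
    VM.mk x true * VM.mk y false = VM.mk (x + phiN n y) true := rfl
theorem VM.mul_tt {n : ℕ} (x y : VN n) :
    VM.mk x true * VM.mk y true = VM.mk (x + phiN n y + zN n) false := rfl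
theorem VM.one_def {n : ℕ} : (1 : VM n) = VM.mk 0 false := rfl
theorem VM.inv_f {n : ℕ} (x : VN n) : (VM.mk x false)⁻¹ = VM.mk (-x) false := rfl
theorem VM.inv_t {n : ℕ} (x : VN n) : (VM.mk x true)⁻¹ = VM.mk (-phiN n x + zN n) true := rfl
theorem VM.mk_inj {n : ℕ} (x y : VN n) (s t : Bool) :
    VM.mk x s = VM.mk y t ↔ x = y ∧ s = t := Prod.mk_inj

instance (n : ℕ) : Group (VM n) := Group.ofLeftAxioms
  (by
    rintro ⟨x, r⟩ ⟨y, s⟩ ⟨w, t⟩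
    change VM.mk x r * VM.mk y s * VM.mk w t = VM.mk x r * (VM.mk y s * VM.mk w t)
    cases r <;> cases s <;> cases t <;>
      simp only [VM.mul_ff, VM.mul_tf, VM.mul_tt, VM.mk_inj, map_add, phiN_phiN, phiN_zN,
        and_true] <;> abel)
  (by
    rintro ⟨x, r⟩
    change VM.mk 0 false * VM.mk x r = VM.mk x r
    simp [VM.mul_ff])
  (by
    rintro ⟨x, r⟩
    change (VM.mk x r)⁻¹ * VM.mk x r = VM.mk 0 false
    cases r
    · simp [VM.mul_ff, VM.inv_f]
    · simp only [VM.mul_tt, VM.inv_t, VM.mk_inj, and_true]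
      rw [show -phiN n x + zN n + phiN n x + zN n = zN n + zN n by abel, zN_add_zN])

instance (n : ℕ) [NeZero n] : Fintype (VM n) := inferInstanceAs (Fintype (VN n × Bool))

theorem card_VM (n : ℕ) [NeZero n] : Fintype.card (VM n) = 8 * n := by
  change Fintype.card (VN n × Bool) = _
  simp [ZMod.card]
  ring

theorem card_comm_VM (n : ℕ) [NeZero n] :
    Nat.card {p : VM n × VM n // Commute p.1 p.2}
      = 16 * n ^ 2 + 12 * n * Nat.card {x : VN n // phiN n x = x} := by
  classical
  have hN : Fintype.card (VN n) = 4 * n := by simp [ZMod.card]; ring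
  have e1 : ∀ x y : VN n, Commute (VM.mk x false) (VM.mk y false) ↔ True := by
    intro x y
    simp [commute_iff_eq, VM.mul_ff, VM.mk_inj, add_comm]
  have e2 : ∀ x y : VN n, Commute (VM.mk x false) (VM.mk y true) ↔ phiN n x = x := by
    intro x y
    simp only [commute_iff_eq, VM.mul_ff, VM.mul_tf, VM.mk_inj, and_true]
    rw [add_comm, add_right_inj, eq_comm]
  have e3 : ∀ x y : VN n, Commute (VM.mk x true) (VM.mk y false) ↔ phiN n y = y := by
    intro x y
    rw [Commute.symm_iff, e2]
  have e4 : ∀ x y : VN n, Commute (VM.mk x true) (VM.mk y true)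
      ↔ phiN n (y - x) = y - x := by
    intro x y
    simp only [commute_iff_eq, VM.mul_tt, VM.mk_inj, and_true, add_left_inj, map_sub]
    constructor
    · intro h
      rw [sub_eq_sub_iff_add_eq_add, add_comm, h]
    · intro h
      rw [sub_eq_sub_iff_add_eq_add] at h
      rw [add_comm, h]
  have hf : ∑ x : VN n, (if phiN n x = x then 1 else 0)
      = Nat.card {x : VN n // phiN n x = x} := by
    rw [Nat.card_eq_fintype_card, Fintype.card_subtype, Finset.card_filter]
  have hf' : ∀ x, ∑ y : VN n, (if phiN n (y - x) = y - x then 1 else 0)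
      = Nat.card {x : VN n // phiN n x = x} := by
    intro x
    rw [← hf]
    exact Equiv.sum_comp (Equiv.subRight x) (fun y => if phiN n y = y then 1 else 0)
  rw [Nat.card_eq_fintype_card, Fintype.card_subtype, Finset.card_filter,
    Fintype.sum_prod_type]
  have hs : ∀ f : VM n → ℕ, ∑ p, f p = ∑ x, (f (VM.mk x true) + f (VM.mk x false)) := by
    intro f
    refine (Fintype.sum_prod_type (fun p : VN n × Bool => f p)).trans ?_
    refine Finset.sum_congr rfl fun x _ => ?_
    rw [Fintype.sum_bool]
    rfl
  simp only [hs, e1, e2, e3, e4, Finset.sum_add_distrib, hf', hf, Finset.sum_const,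
    Finset.card_univ, hN, smul_eq_mul, if_true, ← Finset.mul_sum]
  ring

theorem phiN_fix_iff (n : ℕ) [NeZero n] (x : VN n) :
    phiN n x = x ↔ x.1 = 0 ∨ (Even n ∧ x.1 = (n : ZMod (2 * n))) := by
  obtain ⟨i, e⟩ := x
  have hpos : 0 < n := Nat.pos_of_ne_zero (NeZero.ne n)
  have : NeZero (2 * n) := ⟨by omega⟩
  obtain ⟨k, hk, rfl⟩ : ∃ k : ℕ, k < 2 * n ∧ (k : ZMod (2 * n)) = i :=
    ⟨i.val, ZMod.val_lt i, ZMod.natCast_zmod_val i⟩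
  have h1 : phiN n ((k : ZMod (2 * n)), e) = ((k : ZMod (2 * n)), e) ↔
      n ∣ k ∧ 2 ∣ k := by
    simp only [phiN, AddMonoidHom.coe_mk, ZeroHom.coe_mk, Prod.mk.injEq, map_natCast,
      add_eq_left]
    rw [ZMod.natCast_eq_zero_iff, neg_eq_iff_add_eq_zero, ← Nat.cast_add,
      ZMod.natCast_eq_zero_iff, ← two_mul, Nat.mul_dvd_mul_iff_left (by norm_num)]
  rw [h1]
  have h2 : (k : ZMod (2 * n)) = 0 ↔ k = 0 := by
    rw [ZMod.natCast_eq_zero_iff]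
    exact ⟨fun h => Nat.eq_zero_of_dvd_of_lt h hk, fun h => h ▸ dvd_zero _⟩
  have h3 : (k : ZMod (2 * n)) = (n : ZMod (2 * n)) ↔ k = n := by
    rw [ZMod.natCast_eq_natCast_iff', Nat.mod_eq_of_lt hk, Nat.mod_eq_of_lt (by omega)]
  simp only [h2, h3]
  constructor
  · rintro ⟨⟨c, rfl⟩, h⟩
    have hc : c < 2 := by nlinarith
    interval_cases c
    · left; simp
    · right
      simpa [even_iff_two_dvd] using h
  · rintro (rfl | ⟨h, rfl⟩)
    · simp
    · exact ⟨dvd_rfl, h.two_dvd⟩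

theorem card_fix_odd (n : ℕ) [NeZero n] (h : Odd n) :
    Nat.card {x : VN n // phiN n x = x} = 2 := by
  classical
  have hs : (Finset.univ.filter fun x : VN n => phiN n x = x)
      = ({0} : Finset (ZMod (2 * n))) ×ˢ (Finset.univ : Finset (ZMod 2)) := by
    ext x
    have := Nat.not_even_iff_odd.2 h
    rw [Finset.mem_product]
    simp [phiN_fix_iff, this]
  rw [Nat.card_eq_fintype_card, Fintype.card_subtype, hs, Finset.card_product]
  simp [ZMod.card]

theorem card_fix_even (n : ℕ) [NeZero n] (h : Even n) :
    Nat.card {x : VN n // phiN n x = x} = 4 := by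
  classical
  have hpos : 0 < n := Nat.pos_of_ne_zero (NeZero.ne n)
  have hs : (Finset.univ.filter fun x : VN n => phiN n x = x)
      = ({0, (n : ZMod (2 * n))} : Finset (ZMod (2 * n))) ×ˢ
        (Finset.univ : Finset (ZMod 2)) := by
    ext x
    simp [phiN_fix_iff, h]
  have hne : (0 : ZMod (2 * n)) ≠ (n : ZMod (2 * n)) := by
    intro h0
    have := (ZMod.natCast_eq_zero_iff _ _).1 h0.symm
    have := Nat.le_of_dvd hpos this
    omega
  rw [Nat.card_eq_fintype_card, Fintype.card_subtype, hs, Finset.card_product,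
    Finset.card_pair hne]
  simp [ZMod.card]

end Model

section Iso

variable (n : ℕ)

theorem rel_mem {r : FreeGroup (Fin 2)} (h : r ∈ V8nRels n) :
    PresentedGroup.mk (V8nRels n) r = 1 := PresentedGroup.one_of_mem h

theorem aV_pow : aV n ^ (2 * n) = 1 := by
  have := rel_mem n (r := (FreeGroup.of 0) ^ (2 * n)) (by simp [V8nRels])
  rwa [map_pow] at this

theorem bV_pow : bV n ^ 4 = 1 := by
  have := rel_mem n (r := (FreeGroup.of 1) ^ 4) (by simp [V8nRels])
  rwa [map_pow] at this

theorem ba_sq : (bV n * aV n) ^ 2 = 1 := by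
  have := rel_mem n (r := (FreeGroup.of 1 * FreeGroup.of 0) ^ 2) (by simp [V8nRels])
  rwa [map_pow, map_mul] at this

theorem bia_sq : ((bV n)⁻¹ * aV n) ^ 2 = 1 := by
  have := rel_mem n (r := ((FreeGroup.of 1)⁻¹ * FreeGroup.of 0) ^ 2) (by simp [V8nRels])
  rwa [map_pow, map_mul, map_inv] at this

theorem z_inv : (bV n ^ 2)⁻¹ = bV n ^ 2 := by
  rw [inv_eq_iff_mul_eq_one, ← pow_add, bV_pow]

theorem binv : (bV n)⁻¹ = bV n ^ 2 * bV n := by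
  rw [inv_eq_iff_mul_eq_one, ← pow_succ, ← pow_succ', bV_pow]

theorem ba_eq : bV n * aV n = (aV n)⁻¹ * (bV n)⁻¹ := by
  rw [← mul_inv_rev, eq_inv_iff_mul_eq_one, ← sq, ba_sq]

theorem bia_eq : (bV n)⁻¹ * aV n = (aV n)⁻¹ * bV n := by
  have : (aV n)⁻¹ * bV n = ((bV n)⁻¹ * aV n)⁻¹ := by group
  rw [this, eq_inv_iff_mul_eq_one, ← sq, bia_sq]

theorem z_comm : Commute (bV n ^ 2) (aV n) := by
  have h1 : aV n * (bV n)⁻¹ = bV n * (aV n)⁻¹ := by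
    have h := bia_eq n
    rw [inv_mul_eq_iff_eq_mul] at h
    rw [mul_inv_eq_iff_eq_mul]
    rw [mul_assoc, ← mul_assoc] at *
    simpa [mul_assoc] using h
  rw [commute_iff_eq]
  calc bV n ^ 2 * aV n = bV n * (bV n * aV n) := by rw [sq, mul_assoc]
    _ = bV n * (aV n)⁻¹ * (bV n)⁻¹ := by rw [ba_eq, mul_assoc]
    _ = aV n * (bV n ^ 2)⁻¹ := by rw [← h1, sq]; group
    _ = aV n * bV n ^ 2 := by rw [z_inv]

theorem b_conj : bV n * aV n * (bV n)⁻¹ = (aV n)⁻¹ * bV n ^ 2 := by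
  rw [ba_eq, ← z_inv, sq]; group

theorem b_zpow (i : ℤ) : bV n * aV n ^ i = aV n ^ (-i) * (bV n ^ 2) ^ i * bV n := by
  have h := congrArg (· ^ i) (b_conj n)
  simp only [conj_zpow] at h
  rw [((z_comm n).symm.inv_left).mul_zpow, inv_zpow', mul_inv_eq_iff_eq_mul] at h
  exact h

theorem b_mul (i q : ℤ) (w : V8n n) : bV n * (aV n ^ i * (bV n ^ 2) ^ q * w)
    = aV n ^ (-i) * (bV n ^ 2) ^ (i + q) * (bV n * w) := by
  have hc : Commute (bV n) ((bV n ^ 2) ^ q) := ((Commute.refl (bV n)).pow_right 2).zpow_right q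
  calc _ = (bV n * aV n ^ i) * (bV n ^ 2) ^ q * w := by simp only [mul_assoc]
    _ = aV n ^ (-i) * (bV n ^ 2) ^ i * (bV n * (bV n ^ 2) ^ q) * w := by
      rw [b_zpow]; simp only [mul_assoc]
    _ = _ := by rw [hc.eq, zpow_add]; simp only [mul_assoc]

theorem z_mul (p i q : ℤ) (w : V8n n) : (bV n ^ 2) ^ p * (aV n ^ i * (bV n ^ 2) ^ q * w)
    = aV n ^ i * (bV n ^ 2) ^ (p + q) * w := by
  have hc : Commute ((bV n ^ 2) ^ p) (aV n ^ i) := ((z_comm n).zpow_left p).zpow_right i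
  rw [zpow_add, ← mul_assoc, ← mul_assoc, hc.eq]
  simp only [mul_assoc]

theorem normal_form (v : V8n n) : ∃ (i q : ℤ) (r : Bool),
    v = aV n ^ i * (bV n ^ 2) ^ q * (if r then bV n else 1) := by
  have hb : ∀ v : V8n n, (∃ (i q : ℤ) (r : Bool),
      v = aV n ^ i * (bV n ^ 2) ^ q * (if r then bV n else 1)) →
      ∃ (i q : ℤ) (r : Bool),
        bV n * v = aV n ^ i * (bV n ^ 2) ^ q * (if r then bV n else 1) := by
    rintro _ ⟨i, q, r, rfl⟩
    cases r
    · exact ⟨-i, i + q, true, by rw [b_mul]; simp⟩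
    · refine ⟨-i, i + q + 1, false, ?_⟩
      rw [b_mul, zpow_add_one]
      simp [mul_assoc, sq]
  have hv : v ∈ Subgroup.closure (Set.range (PresentedGroup.of (rels := V8nRels n))) := by
    rw [PresentedGroup.closure_range_of]; trivial
  induction hv using Subgroup.closure_induction_left with
  | one => exact ⟨0, 0, false, by simp⟩
  | mul_left x hx y hy ih =>
    obtain ⟨j, rfl⟩ := hx
    fin_cases j
    · obtain ⟨i, q, r, rfl⟩ := ih
      refine ⟨1 + i, q, r, ?_⟩
      change aV n * _ = _
      rw [zpow_add, zpow_one]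
      simp only [mul_assoc]
    · exact hb _ ih
  | inv_mul_cancel x hx y hy ih =>
    obtain ⟨j, rfl⟩ := hx
    fin_cases j
    · obtain ⟨i, q, r, rfl⟩ := ih
      refine ⟨-1 + i, q, r, ?_⟩
      change (aV n)⁻¹ * _ = _
      rw [zpow_add, zpow_neg_one]
      simp only [mul_assoc]
    · obtain ⟨i, q, r, h⟩ := hb _ ih
      refine ⟨i, 1 + q, r, ?_⟩
      change (bV n)⁻¹ * _ = _
      rw [binv, mul_assoc, h, ← z_mul, zpow_one]

theorem VM.pow_f (x : VN n) (k : ℕ) : (VM.mk x false) ^ k = VM.mk (k • x) false := by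
  induction k with
  | zero => simp [VM.one_def]
  | succ k ih => rw [pow_succ, ih, VM.mul_ff, succ_nsmul]

theorem VM.zpow_f (x : VN n) (k : ℤ) : (VM.mk x false) ^ k = VM.mk (k • x) false := by
  cases k with
  | ofNat k => simp [VM.pow_f]
  | negSucc k => rw [zpow_negSucc, VM.pow_f, VM.inv_f, negSucc_zsmul]

/-- Images of the generators. -/
def genV : Fin 2 → VM n := ![VM.mk (1, 0) false, VM.mk 0 true]

theorem genV_rels : ∀ r ∈ V8nRels n, FreeGroup.lift (genV n) r = 1 := by
  intro r hr
  simp only [V8nRels, Set.mem_insert_iff, Set.mem_singleton_iff] at hr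
  rcases hr with rfl | rfl | rfl | rfl
  · simp only [map_pow, FreeGroup.lift_apply_of, genV, Matrix.cons_val_zero, VM.pow_f, VM.one_def,
      VM.mk_inj, and_true]
    ext
    · simpa using ZMod.natCast_self (2 * n)
    · simp
  · rw [map_pow, FreeGroup.lift_apply_of]
    rw [show (4 : ℕ) = 2 * 2 from rfl, pow_mul, sq, sq]
    simp [genV, VM.mul_tt, VM.mul_ff, VM.one_def, zN_add_zN]
  · rw [map_pow, map_mul, FreeGroup.lift_apply_of, FreeGroup.lift_apply_of, sq]
    simp only [genV, Matrix.cons_val_zero, Matrix.cons_val_one, VM.mul_tf, VM.mul_tt, VM.one_def,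
      VM.mk_inj, and_true, zero_add, phiN_phiN]
    ext <;> simp [phiN, zN, zmod2_add_self]
  · rw [map_pow, map_mul, map_inv, FreeGroup.lift_apply_of, FreeGroup.lift_apply_of, sq]
    simp only [genV, Matrix.cons_val_zero, Matrix.cons_val_one, VM.inv_t, VM.mul_tf, VM.mul_tt,
      VM.one_def, VM.mk_inj, and_true, map_zero, neg_zero, zero_add, phiN_phiN, map_add, phiN_zN]
    ext <;> simp [phiN, zN, zmod2_add_self, add_assoc]

/-- The map to the model. -/
def toVM : V8n n →* VM n := PresentedGroup.toGroup (genV_rels n)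

theorem toVM_a : toVM n (aV n) = VM.mk (1, 0) false := PresentedGroup.toGroup.of _
theorem toVM_b : toVM n (bV n) = VM.mk 0 true := PresentedGroup.toGroup.of _

theorem toVM_nf (i q : ℤ) (r : Bool) :
    toVM n (aV n ^ i * (bV n ^ 2) ^ q * (if r then bV n else 1))
      = VM.mk ((i : ZMod (2 * n)), (q : ZMod 2)) r := by
  have hz : toVM n (bV n ^ 2) = VM.mk (zN n) false := by
    rw [map_pow, toVM_b, sq, VM.mul_tt]; simp
  have hr : toVM n (if r then bV n else 1) = VM.mk 0 r := by
    cases r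
    · simp [VM.one_def]
    · simp [toVM_b]
  rw [map_mul, map_mul, map_zpow, map_zpow, toVM_a, hz, hr, VM.zpow_f, VM.zpow_f, VM.mul_ff,
    VM.mul_ff, VM.mk_inj]
  refine ⟨?_, rfl⟩
  ext <;> simp [zN]

theorem toVM_bij : Function.Bijective (toVM n) := by
  constructor
  · rw [injective_iff_map_eq_one]
    intro v hv
    obtain ⟨i, q, r, rfl⟩ := normal_form n v
    rw [toVM_nf, VM.one_def, VM.mk_inj] at hv
    obtain ⟨h, rfl⟩ := hv
    rw [Prod.mk_eq_zero, ZMod.intCast_zmod_eq_zero_iff_dvd,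
      ZMod.intCast_zmod_eq_zero_iff_dvd] at h
    obtain ⟨⟨c, rfl⟩, ⟨d, rfl⟩⟩ := h
    have hb : (bV n ^ 2) ^ 2 = 1 := by rw [← pow_mul, bV_pow]
    rw [zpow_mul, zpow_mul, zpow_natCast, zpow_natCast, aV_pow, hb]
    simp
  · rintro ⟨⟨i, q⟩, r⟩
    obtain ⟨i, rfl⟩ := ZMod.intCast_surjective i
    obtain ⟨q, rfl⟩ := ZMod.intCast_surjective q
    exact ⟨_, toVM_nf n i q r⟩

/-- The isomorphism with the model. -/
noncomputable def isoVM : V8n n ≃* VM n := MulEquiv.ofBijective (toVM n) (toVM_bij n)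

theorem card_V8n [NeZero n] : Nat.card (V8n n) = 8 * n := by
  rw [Nat.card_congr (isoVM n).toEquiv, Nat.card_eq_fintype_card, card_VM]

theorem card_conj_V8n [NeZero n] :
    2 * Nat.card (ConjClasses (V8n n)) = 4 * n + 3 * Nat.card {x : VN n // phiN n x = x} := by
  have hpos : 0 < n := Nat.pos_of_ne_zero (NeZero.ne n)
  have h := card_comm_eq_card_conjClasses_mul_card (V8n n)
  have e : {p : V8n n × V8n n // Commute p.1 p.2} ≃ {p : VM n × VM n // Commute p.1 p.2} :=
    ((isoVM n).toEquiv.prodCongr (isoVM n).toEquiv).subtypeEquiv (by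
      rintro ⟨x, y⟩
      simp only [commute_iff_eq, Equiv.prodCongr_apply, Prod.map, MulEquiv.toEquiv_eq_coe,
        MulEquiv.coe_toEquiv, ← map_mul, EmbeddingLike.apply_eq_iff_eq])
  rw [Nat.card_congr e, card_comm_VM, card_V8n] at h
  have h4 : 4 * n * (2 * Nat.card (ConjClasses (V8n n)))
      = 4 * n * (4 * n + 3 * Nat.card {x : VN n // phiN n x = x}) := by
    linarith
  exact Nat.eq_of_mul_eq_mul_left (by omega) h4

end Iso

/-- If `char F = 0`, or `char F = p` for an odd prime `p` with
`gcd(n, p) = 1`, then `Der_F(F V_{8n})` has dimension `3(2n-1)` over `F` when `n`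
is odd, and dimension `6(n-1)` when `n` is even. -/
theorem dim_fDerivations_V8n (n : ℕ) (hn : 0 < n) (F : Type*) [Field F]
    (hchar : CharZero F ∨ ∃ p : ℕ, p.Prime ∧ Odd p ∧ Nat.gcd n p = 1 ∧ CharP F p) :
    (Odd n →
      Module.finrank F (fDerivations F (MonoidAlgebra F (V8n n))) = 3 * (2 * n - 1)) ∧
    (Even n →
      Module.finrank F (fDerivations F (MonoidAlgebra F (V8n n))) = 6 * (n - 1)) := by
  have : NeZero n := ⟨hn.ne'⟩
  have : Finite (V8n n) := Nat.finite_of_card_ne_zero (by rw [card_V8n]; omega)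
  have : Fintype (V8n n) := Fintype.ofFinite _
  have hcard : (Fintype.card (V8n n) : F) ≠ 0 := by
    rw [← Nat.card_eq_fintype_card, card_V8n]
    rcases hchar with h | ⟨p, hp, hodd, hg, hF⟩
    · exact Nat.cast_ne_zero.2 (by omega)
    · rw [Ne, CharP.cast_eq_zero_iff F p]
      intro hd
      rcases (Nat.Prime.dvd_mul hp).1 hd with h | h
      · have h2 : p ∣ 2 := hp.dvd_of_dvd_pow (show p ∣ 2 ^ 3 by simpa using h)
        rw [Nat.prime_dvd_prime_iff_eq hp Nat.prime_two] at h2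
        subst h2
        exact absurd hodd (by decide)
      · have := Nat.dvd_gcd h dvd_rfl
        rw [hg] at this
        exact hp.one_lt.ne' (Nat.dvd_one.1 this)
  have h1 := finrank_fDerivations F (V8n n) hcard
  have h2 := card_conj_V8n n
  rw [card_V8n] at h1
  constructor
  · intro ho
    rw [card_fix_odd n ho] at h2
    omega
  · intro he
    rw [card_fix_even n he] at h2
    omega
end

section
/- Let n be a positive integer and let F be a field that is an algebraic extension of a prime field, whose characteristic is 0 or an odd rational prime p with gcd(n,p) = 1. Then every derivation of the group algebra F V_{8n} is inner; that is, for every additive map d : F V_{8n} → F V_{8n} satisfying d(xy) = d(x)y + x d(y) for all x, y, there exists β ∈ F V_{8n} with d(α) = αβ − βα for all α ∈ F V_{8n}. -/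
namespace V8nAux

/-- Group-theoretic facts from the relations only. -/
lemma conj_rel {G : Type*} [Group G] {a b : G} (hb : b ^ 4 = 1)
    (h1 : (b * a) ^ 2 = 1) (h2 : (b⁻¹ * a) ^ 2 = 1) :
    Commute (b ^ 2) a ∧ b * a * b⁻¹ = a⁻¹ * b ^ 2 := by
  have e1 : a * b * a = b⁻¹ := by
    rw [eq_comm, inv_eq_iff_mul_eq_one]; rw [pow_two] at h1; simpa [mul_assoc] using h1
  have e2 : a * b⁻¹ * a = b := by
    have : b⁻¹ * (a * b⁻¹ * a) = 1 := by rw [← h2, pow_two]; simp only [mul_assoc]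
    rwa [inv_mul_eq_one, eq_comm] at this
  have e3 : b⁻¹ * b⁻¹ = b * b := by
    have : b * b * (b * b) = 1 := by rw [← hb, pow_succ, pow_succ, pow_two]; simp only [mul_assoc]
    calc b⁻¹ * b⁻¹ = b⁻¹ * b⁻¹ * (b * b * (b * b)) := by rw [this, mul_one]
      _ = b * b := by simp [mul_assoc]
  have f1 : b * a = a⁻¹ * b⁻¹ := by rw [← e1]; group
  have f2 : b⁻¹ * a = a⁻¹ * b := by nth_rewrite 2 [← e2]; group
  constructor
  · show b ^ 2 * a = a * b ^ 2
    have f3 : a * b = b⁻¹ * a⁻¹ := by rw [← e1]; group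
    calc b ^ 2 * a = b⁻¹ * (b⁻¹ * a) := by rw [pow_two, ← e3, mul_assoc]
      _ = b⁻¹ * a⁻¹ * b := by rw [f2, mul_assoc]
      _ = a * b ^ 2 := by rw [← f3, pow_two, mul_assoc]
  · rw [f1, mul_assoc, e3, pow_two]

lemma b_zpow {G : Type*} [Group G] {a b : G} (hc : Commute (b ^ 2) a)
    (h : b * a * b⁻¹ = a⁻¹ * b ^ 2) (i : ℤ) :
    b * a ^ i = a ^ (-i) * b ^ (2 * i + 1) := by
  have : b * a ^ i * b⁻¹ = a ^ (-i) * b ^ (2 * i) := by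
    rw [← conj_zpow, h, (hc.symm.inv_left).mul_zpow, zpow_mul, inv_zpow, zpow_neg]
    norm_cast
  rw [zpow_add_one, ← mul_assoc, ← this]; group

lemma pow_eq_one {G : Type*} [Group G] {a b : G} {n : ℕ} (ha : a ^ (2 * n) = 1) (hb : b ^ 4 = 1)
    (hc : Commute (b ^ 2) a) (h : b * a * b⁻¹ = a⁻¹ * b ^ 2) (i j : ℤ) :
    (a ^ i * b ^ j) ^ (4 * n) = 1 := by
  have hz : ∀ k : ℤ, Commute (b ^ (2 * k)) a := fun k => by
    rw [zpow_mul]; exact_mod_cast hc.zpow_left k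
  have hb4 : ∀ k : ℤ, b ^ (4 * k) = 1 := fun k => by
    rw [zpow_mul]; norm_cast; rw [hb, one_zpow]
  have ha2 : ∀ k : ℤ, a ^ (2 * n * k) = 1 := fun k => by
    rw [zpow_mul]; norm_cast; rw [ha, one_zpow]
  rcases Int.even_or_odd' j with ⟨k, rfl | rfl⟩
  · rw [((hz k).zpow_right i).symm.mul_pow, ← zpow_natCast, ← zpow_natCast, ← zpow_mul, ← zpow_mul]
    have e1 : i * ((4 * n : ℕ) : ℤ) = 2 * n * (2 * i) := by push_cast; ring
    have e2 : 2 * k * ((4 * n : ℕ) : ℤ) = 4 * (2 * k * n) := by push_cast; ring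
    rw [e1, e2, ha2, hb4, one_mul]
  · rw [pow_mul]
    have sq : (a ^ i * b ^ (2 * k + 1)) ^ 2 = b ^ (2 * (i + 1 + 2 * k)) := by
      calc (a ^ i * b ^ (2 * k + 1)) ^ 2
          = a ^ i * (b * (b ^ (2 * k) * a ^ i)) * b ^ (2 * k + 1) := by
            rw [pow_two, add_comm (2 * k) 1, zpow_add, zpow_one]; group
        _ = a ^ i * (b * a ^ i) * b ^ (4 * k + 1) := by
            rw [((hz k).zpow_right i).eq]; group
        _ = b ^ (2 * (i + 1 + 2 * k)) := by
            rw [b_zpow hc h, ← mul_assoc, ← zpow_add, add_neg_cancel, zpow_zero, one_mul, ← zpow_add]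
            congr 1; ring
    have : (a ^ i * b ^ (2 * k + 1)) ^ 4 = 1 := by
      rw [show 4 = 2 * 2 by rfl, pow_mul, sq, ← zpow_natCast, ← zpow_mul, ← hb4 (i + 1 + 2 * k)]
      congr 1; push_cast; ring
    rw [this, one_pow]

lemma rels (n : ℕ) : aV n ^ (2 * n) = 1 ∧ bV n ^ 4 = 1 ∧ (bV n * aV n) ^ 2 = 1 ∧
    ((bV n)⁻¹ * aV n) ^ 2 = 1 := by
  refine ⟨?_, ?_, ?_, ?_⟩ <;>
  exact PresentedGroup.one_of_mem (rels := V8nRels n) (by simp [V8nRels])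

lemma exists_form (n : ℕ) (hn : 0 < n) (g : V8n n) : ∃ i j : ℤ, g = aV n ^ i * bV n ^ j := by
  obtain ⟨ha, hb, h1, h2⟩ := rels n
  obtain ⟨hc, h⟩ := conj_rel hb h1 h2
  have hg : g ∈ Subgroup.closure (Set.range (PresentedGroup.of (rels := V8nRels n))) := by
    rw [PresentedGroup.closure_range_of]; trivial
  have hB : ∀ i j : ℤ, bV n * (aV n ^ i * bV n ^ j) = aV n ^ (-i) * bV n ^ (2 * i + 1 + j) := by
    intro i j
    rw [← mul_assoc, b_zpow hc h, mul_assoc, ← zpow_add]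
  induction hg using Subgroup.closure_induction_left with
  | one => exact ⟨0, 0, by simp⟩
  | mul_left x hx y hy ih =>
    obtain ⟨i, j, rfl⟩ := ih
    obtain ⟨k, rfl⟩ := hx
    fin_cases k
    · exact ⟨1 + i, j, by rw [zpow_add, zpow_one, mul_assoc]; rfl⟩
    · exact ⟨_, _, hB i j⟩
  | inv_mul_cancel x hx y hy ih =>
    obtain ⟨i, j, rfl⟩ := ih
    obtain ⟨k, rfl⟩ := hx
    fin_cases k
    · exact ⟨-1 + i, j, by rw [zpow_add, zpow_neg_one, mul_assoc]; rfl⟩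
    · refine ⟨-i, j + 2 * i - 1, ?_⟩
      show (bV n)⁻¹ * _ = _
      rw [inv_mul_eq_iff_eq_mul, hB, neg_neg]
      congr 2; ring

lemma finite_V (n : ℕ) (hn : 0 < n) : Finite (V8n n) := by
  obtain ⟨ha, hb, h1, h2⟩ := rels n
  have fa : (Subgroup.zpowers (aV n) : Set (V8n n)).Finite :=
    (isOfFinOrder_iff_pow_eq_one.2 ⟨2 * n, by omega, ha⟩).finite_zpowers
  have fb : (Subgroup.zpowers (bV n) : Set (V8n n)).Finite :=
    (isOfFinOrder_iff_pow_eq_one.2 ⟨4, by omega, hb⟩).finite_zpowers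
  refine Set.finite_univ_iff.1 ((Set.Finite.image2 (· * ·) fa fb).subset ?_)
  intro g _
  obtain ⟨i, j, rfl⟩ := exists_form n hn g
  exact ⟨_, ⟨i, rfl⟩, _, ⟨j, rfl⟩, rfl⟩

lemma card_ne_zero (n : ℕ) (hn : 0 < n) (F : Type*) [Field F]
    (hchar : CharZero F ∨ ∃ p : ℕ, p.Prime ∧ Odd p ∧ Nat.gcd n p = 1 ∧ CharP F p) :
    (Nat.card (V8n n) : F) ≠ 0 := by
  have := finite_V n hn
  rcases hchar with h | ⟨p, hp, hodd, hgcd, hF⟩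
  · exact_mod_cast Nat.card_pos.ne'
  · rw [Ne, CharP.cast_eq_zero_iff F p]
    intro hdvd
    have : Fact p.Prime := ⟨hp⟩
    obtain ⟨g, hg⟩ := exists_prime_orderOf_dvd_card' p hdvd
    obtain ⟨ha, hb, h1, h2⟩ := rels n
    obtain ⟨hc, h⟩ := conj_rel hb h1 h2
    obtain ⟨i, j, rfl⟩ := exists_form n hn g
    have h4 := orderOf_dvd_of_pow_eq_one (pow_eq_one ha hb hc h i j)
    rw [hg] at h4
    rcases hp.dvd_mul.1 h4 with h5 | h5
    · have := hp.dvd_of_dvd_pow (show p ∣ 2 ^ 2 from h5)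
      rw [Nat.prime_dvd_prime_iff_eq hp Nat.prime_two] at this
      subst this
      exact absurd hodd (by decide)
    · have := Nat.dvd_gcd h5 dvd_rfl
      rw [hgcd] at this
      exact hp.one_lt.ne' (Nat.dvd_one.1 this)

lemma perfect_bot (F : Type*) [Field F] (h : CharZero F ∨ ∃ p : ℕ, p.Prime ∧ CharP F p) :
    PerfectField (⊥ : Subfield F) := by
  rcases h with h | ⟨p, hp, hF⟩
  · infer_instance
  · have : Fact p.Prime := ⟨hp⟩
    have : Finite (⊥ : Subfield F) := (Subfield.fintypeBot F p).finite
    infer_instance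

/-- A derivation of a field, algebraic over its prime field, with values in a module vanishes. -/
lemma deriv_zero (F : Type*) [Field F] {M : Type*} [AddCommGroup M] [Module F M]
    (hp : PerfectField (⊥ : Subfield F))
    (halg : ∀ x : F, IsAlgebraic (⊥ : Subfield F) x) (δ : F → M)
    (hadd : ∀ x y, δ (x + y) = δ x + δ y) (hmul : ∀ x y, δ (x * y) = x • δ y + y • δ x) (c : F) :
    δ c = 0 := by
  have h0 : δ 0 = 0 := by simpa using hadd 0 0
  have h1 : δ 1 = 0 := by simpa using hmul 1 1
  have hneg : ∀ x, δ (-x) = - δ x := fun x => by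
    have := hadd x (-x); rw [add_neg_cancel, h0] at this
    exact (neg_eq_of_add_eq_zero_right this.symm).symm
  let K : Subfield F :=
    { carrier := {x | δ x = 0}
      mul_mem' := fun {x y} hx hy => by
        simp only [Set.mem_ofPred_eq] at *; rw [hmul, hx, hy]; simp
      one_mem' := h1
      add_mem' := fun {x y} hx hy => by
        simp only [Set.mem_ofPred_eq] at *; rw [hadd, hx, hy]; simp
      zero_mem' := h0
      neg_mem' := fun {x} hx => by
        simp only [Set.mem_ofPred_eq] at *; rw [hneg, hx]; simp
      inv_mem' := fun x hx => by
        simp only [Set.mem_ofPred_eq] at *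
        by_cases hx0 : x = 0
        · simpa [hx0] using h0
        · have := hmul x x⁻¹
          rw [mul_inv_cancel₀ hx0, h1, hx, smul_zero, add_zero] at this
          exact (smul_eq_zero.1 this.symm).resolve_left hx0 }
  have hK : ∀ x : (⊥ : Subfield F), δ x = 0 := fun x => (bot_le : ⊥ ≤ K) x.2
  let D : Derivation (⊥ : Subfield F) F M := Derivation.mk'
    { toFun := δ
      map_add' := hadd
      map_smul' := fun r x => by
        rw [Subfield.smul_def, smul_eq_mul, hmul, hK, smul_zero, add_zero]; rfl } hmul
  have hsep : IsSeparable (⊥ : Subfield F) c :=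
    PerfectField.separable_of_irreducible (minpoly.irreducible (halg c).isIntegral)
  have hD := D.map_aeval (minpoly (⊥ : Subfield F) c) c
  rw [minpoly.aeval, map_zero] at hD
  exact (smul_eq_zero.1 hD.symm).resolve_left (hsep.aeval_derivative_ne_zero (minpoly.aeval _ _))

/-- Maschke-style averaging. -/
lemma inner_of_finite {G F : Type*} [Group G] [Finite G] [Field F] (hN : (Nat.card G : F) ≠ 0)
    (d : MonoidAlgebra F G → MonoidAlgebra F G)
    (hadd : ∀ x y, d (x + y) = d x + d y)
    (hleib : ∀ x y, d (x * y) = d x * y + x * d y)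
    (hlin : ∀ (c : F) x, d (c • x) = c • d x) :
    ∃ β : MonoidAlgebra F G, ∀ α, d α = α * β - β * α := by
  have := Fintype.ofFinite G
  let s : G → MonoidAlgebra F G := MonoidAlgebra.of F G
  have smul : ∀ g h, s (g * h) = s g * s h := map_mul (MonoidAlgebra.of F G)
  have s1 : s 1 = 1 := map_one (MonoidAlgebra.of F G)
  have sinv : ∀ h, s h⁻¹ * s h = 1 := fun h => by rw [← smul, inv_mul_cancel, s1]
  let S := ∑ g, d (s g) * s g⁻¹
  have key : ∀ h, (Nat.card G : F) • d (s h) = S * s h - s h * S := by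
    intro h
    have e : S = ∑ g, d (s (h * g)) * s (h * g)⁻¹ :=
      (Equiv.sum_comp (Equiv.mulLeft h) (fun g => d (s g) * s g⁻¹)).symm
    have e2 : S * s h = ∑ g, (d (s h) + s h * (d (s g) * s g⁻¹)) := by
      rw [e, Finset.sum_mul]
      refine Finset.sum_congr rfl fun g _ => ?_
      have a1 : s (h * g)⁻¹ * s h = s g⁻¹ := by rw [← smul]; congr 1; group
      have a2 : s g * s g⁻¹ = 1 := by rw [← smul, mul_inv_cancel, s1]
      rw [mul_assoc, a1, smul, hleib, add_mul, mul_assoc, a2, mul_one, mul_assoc]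
    rw [e2, Finset.sum_add_distrib, ← Finset.mul_sum, add_sub_cancel_right, Finset.sum_const,
      Finset.card_univ, Nat.card_eq_fintype_card, Nat.cast_smul_eq_nsmul]
  have h0 : d 0 = 0 := by simpa using hadd 0 0
  refine ⟨-((Nat.card G : F)⁻¹ • S), fun α => ?_⟩
  induction α using MonoidAlgebra.induction_on with
  | of g =>
    have := key g
    change d (s g) = s g * _ - _ * s g
    rw [← inv_smul_smul₀ hN (d (s g)), this, smul_sub]
    simp only [mul_neg, neg_mul, mul_smul_comm, smul_mul_assoc]
    abel
  | add x y hx hy => rw [hadd, hx, hy, add_mul, mul_add]; abel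
  | smul r x hx => rw [hlin, hx, smul_sub, smul_mul_assoc, mul_smul_comm]

end V8nAux

/-- Let `F` be an algebraic extension of a prime field (i.e. every
element of `F` is algebraic over its prime subfield `⊥`) whose characteristic is `0`
or an odd prime `p` with `gcd(n, p) = 1`. Then every derivation of `F V_{8n}`
(additive map satisfying the Leibniz rule) is inner. -/
theorem derivation_V8n_isInner (n : ℕ) (hn : 0 < n) (F : Type*) [Field F]
    (halg : ∀ x : F, IsAlgebraic (⊥ : Subfield F) x)
    (hchar : CharZero F ∨ ∃ p : ℕ, p.Prime ∧ Odd p ∧ Nat.gcd n p = 1 ∧ CharP F p)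
    (d : MonoidAlgebra F (V8n n) → MonoidAlgebra F (V8n n))
    (hadd : ∀ x y, d (x + y) = d x + d y)
    (hleib : ∀ x y, d (x * y) = d x * y + x * d y) :
    ∃ β : MonoidAlgebra F (V8n n), ∀ α, d α = α * β - β * α := by
  have hfin := V8nAux.finite_V n hn
  have hperf := V8nAux.perfect_bot F (hchar.imp id fun ⟨p, hp, _, _, h⟩ => ⟨p, hp, h⟩)
  refine V8nAux.inner_of_finite (V8nAux.card_ne_zero n hn F hchar) d hadd hleib fun c x => ?_
  have hz := V8nAux.deriv_zero F hperf halg (fun c => d (c • (1 : MonoidAlgebra F (V8n n))))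
    (fun x y => by simp only [add_smul, hadd])
    (fun x y => by
      have : (x * y) • (1 : MonoidAlgebra F (V8n n)) = (x • 1) * (y • 1) := by
        rw [smul_mul_smul_comm, mul_one]
      show d ((x * y) • (1 : MonoidAlgebra F (V8n n))) = _
      rw [this, hleib, smul_mul_assoc, one_mul, mul_smul_comm, mul_one]
      exact add_comm _ _) c
  have h := hleib (c • 1) x
  rw [smul_mul_assoc, one_mul] at h
  rw [h, hz, zero_mul, zero_add, smul_mul_assoc, one_mul]
end

section
/- Let n be a positive integer and let F be a field that is an algebraic extension of a prime field of characteristic p, where p is an odd rational prime with gcd(n,p) ≠ 1 (equivalently, p divides n). Then the group algebra F V_{8n} has a non-zero outer derivation; that is, there exists a derivation d of F V_{8n} such that there is no β ∈ F V_{8n} with d(α) = αβ − βα for all α ∈ F V_{8n}. -/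
section helpers

theorem V8n_pow (n : ℕ) : aV n ^ (2 * n) = 1 :=
  PresentedGroup.one_of_mem (rels := V8nRels n) (x := (FreeGroup.of 0) ^ (2 * n))
    (by simp [V8nRels])

theorem V8n_b (n : ℕ) : bV n ^ 4 = 1 :=
  PresentedGroup.one_of_mem (rels := V8nRels n) (x := (FreeGroup.of 1) ^ 4)
    (by simp [V8nRels])

theorem V8n_ba (n : ℕ) : (bV n * aV n) ^ 2 = 1 :=
  PresentedGroup.one_of_mem (rels := V8nRels n) (x := (FreeGroup.of 1 * FreeGroup.of 0) ^ 2)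
    (by simp [V8nRels])

theorem V8n_bia (n : ℕ) : ((bV n)⁻¹ * aV n) ^ 2 = 1 :=
  PresentedGroup.one_of_mem (rels := V8nRels n) (x := ((FreeGroup.of 1)⁻¹ * FreeGroup.of 0) ^ 2)
    (by simp [V8nRels])

/-- Group-theoretic consequences: `b² ` commutes with `a`, and `b` twists `a` into `a⁻¹ b²`. -/
theorem group_facts {G : Type*} [Group G] {a b : G} (hb : b ^ 4 = 1) (h1 : (b * a) ^ 2 = 1)
    (h2 : (b⁻¹ * a) ^ 2 = 1) :
    a * b ^ 2 = b ^ 2 * a ∧ b * a = a⁻¹ * b ^ 2 * b ∧ b * (a⁻¹ * b ^ 2) = a * b := by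
  have e1 : b * a = a⁻¹ * b⁻¹ := by
    have : (b * a) * (b * a) = 1 := by rw [← pow_two, h1]
    rw [← mul_inv_rev]; exact eq_inv_of_mul_eq_one_left this
  have e2 : b⁻¹ * a = a⁻¹ * b := by
    have : (b⁻¹ * a) * (b⁻¹ * a) = 1 := by rw [← pow_two, h2]
    have := eq_inv_of_mul_eq_one_left this
    rw [this]; group
  have e3 : b⁻¹ = b ^ 2 * b := by
    rw [inv_eq_iff_mul_eq_one, ← hb]; group
  have e4 : b * a = a⁻¹ * b ^ 2 * b := by rw [e1, e3]; group
  have c : a * b ^ 2 = b ^ 2 * a := by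
    have h : b * (b * a) = a * b ^ 2 := by
      have k : b * a⁻¹ = a * b⁻¹ := by
        have h : a * (a⁻¹ * b) * a⁻¹ = a * (b⁻¹ * a) * a⁻¹ := by rw [e2]
        simpa [mul_assoc] using h
      rw [e4, ← mul_assoc, ← mul_assoc, k]; group
    rw [← h, pow_two, mul_assoc]
  refine ⟨c, e4, ?_⟩
  have h : a⁻¹ * b ^ 2 = b * a * b⁻¹ := by rw [e4]; group
  have h4 : b ^ 2 * b ^ 2 = 1 := by rw [← hb]; group
  calc b * (a⁻¹ * b ^ 2) = b ^ 2 * a * b⁻¹ := by rw [h, pow_two]; simp only [mul_assoc]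
    _ = a * b ^ 2 * b⁻¹ := by rw [c]
    _ = a * b := by group

end helpers

/-- Let `F` be an algebraic extension of a prime field of
characteristic `p`, `p` an odd prime with `p ∣ n`. Then `F V_{8n}` has a non-zero
outer derivation: a derivation which is not of the form `α ↦ α * β - β * α`. -/
theorem exists_outer_derivation_V8n (n : ℕ) (hn : 0 < n) (F : Type*) [Field F]
    (halg : ∀ x : F, IsAlgebraic (⊥ : Subfield F) x)
    (p : ℕ) (hp : p.Prime) (hodd : Odd p) (hdvd : p ∣ n) (hcharp : CharP F p) :
    ∃ d : MonoidAlgebra F (V8n n) → MonoidAlgebra F (V8n n),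
      (∀ x y, d (x + y) = d x + d y) ∧
      (∀ x y, d (x * y) = d x * y + x * d y) ∧
      ¬ ∃ β : MonoidAlgebra F (V8n n), ∀ α, d α = α * β - β * α := by
  obtain ⟨c1, c2, c3⟩ := group_facts (V8n_b n) (V8n_ba n) (V8n_bia n)
  have rpow := V8n_pow n
  have rb := V8n_b n
  have rba := V8n_ba n
  have rbia := V8n_bia n
  let o : V8n n →* (MonoidAlgebra F (V8n n)) := MonoidAlgebra.of F (V8n n)
  let w : (MonoidAlgebra F (V8n n)) := o (aV n) - o ((aV n)⁻¹ * bV n ^ 2)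
  have hwa : o (aV n) * w = w * o (aV n) := by
    simp only [w, mul_sub, sub_mul, ← map_mul]
    rw [mul_assoc _ (bV n ^ 2), ← c1]; simp
  have hwb : o (bV n) * w = - (w * o (bV n)) := by
    simp only [w, mul_sub, sub_mul, ← map_mul]
    rw [c3, c2]; abel
  let j : V8n n →* (TrivSqZeroExt (MonoidAlgebra F (V8n n)) (MonoidAlgebra F (V8n n)))ˣ :=
    (Units.map ((TrivSqZeroExt.inlHom (MonoidAlgebra F (V8n n)) (MonoidAlgebra F (V8n n))).toMonoidHom.comp o)).comp toUnits.toMonoidHom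
  have jv : ∀ g, ((j g : (TrivSqZeroExt (MonoidAlgebra F (V8n n)) (MonoidAlgebra F (V8n n)))ˣ) : (TrivSqZeroExt (MonoidAlgebra F (V8n n)) (MonoidAlgebra F (V8n n)))) = TrivSqZeroExt.inl (o g) := fun g => rfl
  let U : (TrivSqZeroExt (MonoidAlgebra F (V8n n)) (MonoidAlgebra F (V8n n)))ˣ := ⟨1 + TrivSqZeroExt.inr w, 1 - TrivSqZeroExt.inr w,
    by refine TrivSqZeroExt.ext ?_ ?_ <;> simp, by refine TrivSqZeroExt.ext ?_ ?_ <;> simp⟩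
  have Uv : (U : (TrivSqZeroExt (MonoidAlgebra F (V8n n)) (MonoidAlgebra F (V8n n)))) = 1 + TrivSqZeroExt.inr w := rfl
  have Uiv : ((U⁻¹ : (TrivSqZeroExt (MonoidAlgebra F (V8n n)) (MonoidAlgebra F (V8n n)))ˣ) : (TrivSqZeroExt (MonoidAlgebra F (V8n n)) (MonoidAlgebra F (V8n n)))) = 1 - TrivSqZeroExt.inr w := rfl
  have hUa : Commute (j (aV n)) U := by
    ext1
    simp only [Units.val_mul, jv, Uv]
    refine TrivSqZeroExt.ext ?_ ?_
    · simp
    · simpa using hwa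
  have hUb : U * j (bV n) = j (bV n) * U⁻¹ := by
    ext1
    simp only [Units.val_mul, jv, Uv, Uiv]
    refine TrivSqZeroExt.ext ?_ ?_
    · simp
    · simp [hwb]
  have hUb2 : U * j (bV n)⁻¹ = j (bV n)⁻¹ * U⁻¹ := by
    have h : j (bV n) * U = U⁻¹ * j (bV n) := by
      rw [eq_inv_mul_iff_mul_eq, ← mul_assoc, hUb]; simp
    rw [map_inv, mul_inv_eq_iff_eq_mul, mul_assoc, ← h]; simp
  have hUp : ∀ m : ℕ, ((U ^ m : (TrivSqZeroExt (MonoidAlgebra F (V8n n)) (MonoidAlgebra F (V8n n)))ˣ) : (TrivSqZeroExt (MonoidAlgebra F (V8n n)) (MonoidAlgebra F (V8n n)))) = 1 + TrivSqZeroExt.inr (m • w) := by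
    intro m
    induction m with
    | zero => simp
    | succ m ih =>
      rw [pow_succ, Units.val_mul, ih, Uv]
      refine TrivSqZeroExt.ext ?_ ?_
      · simp
      · simp [add_mul, add_comm]
  have hn0 : (n : F) = 0 := (CharP.cast_eq_zero_iff F p n).2 hdvd
  have hU1 : U ^ (2 * n) = 1 := by
    ext1
    rw [hUp]
    have : (2 * n) • w = ((2 * n : ℕ) : F) • w := (Nat.cast_smul_eq_nsmul F _ _).symm
    rw [this]
    simp [hn0]
  let f : Fin 2 → (TrivSqZeroExt (MonoidAlgebra F (V8n n)) (MonoidAlgebra F (V8n n)))ˣ := ![j (aV n) * U, j (bV n)]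
  have hf : ∀ r ∈ V8nRels n, FreeGroup.lift f r = 1 := by
    rintro r (rfl | rfl | rfl | rfl)
    · simp only [map_pow, FreeGroup.lift_apply_of, f, Matrix.cons_val_zero]
      rw [hUa.mul_pow, hU1, ← map_pow, rpow]; simp
    · simp only [map_pow, FreeGroup.lift_apply_of, f, Matrix.cons_val_one]
      change j (bV n) ^ 4 = 1
      rw [← map_pow]
      simpa using congrArg j rb
    · simp only [map_pow, map_mul, FreeGroup.lift_apply_of, f, Matrix.cons_val_zero,
        Matrix.cons_val_one]
      change (j (bV n) * (j (aV n) * U)) ^ 2 = 1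
      calc (j (bV n) * (j (aV n) * U)) ^ 2
          = j (bV n) * j (aV n) * (U * j (bV n)) * (j (aV n) * U) := by
            simp only [pow_two, mul_assoc]
        _ = (j (bV n) * j (aV n)) ^ 2 := by
            rw [hUb, hUa.eq]; simp only [pow_two, mul_assoc, inv_mul_cancel_left]
        _ = 1 := by rw [← map_mul, ← map_pow, rba, map_one]
    · simp only [map_pow, map_mul, map_inv, FreeGroup.lift_apply_of, f, Matrix.cons_val_zero,
        Matrix.cons_val_one]
      change ((j (bV n))⁻¹ * (j (aV n) * U)) ^ 2 = 1
      rw [← map_inv]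
      calc (j (bV n)⁻¹ * (j (aV n) * U)) ^ 2
          = j (bV n)⁻¹ * j (aV n) * (U * j (bV n)⁻¹) * (j (aV n) * U) := by
            simp only [pow_two, mul_assoc]
        _ = (j (bV n)⁻¹ * j (aV n)) ^ 2 := by
            rw [hUb2, hUa.eq]; simp only [pow_two, mul_assoc, inv_mul_cancel_left]
        _ = 1 := by rw [← map_mul, ← map_pow, rbia, map_one]
  let φ : V8n n →* (TrivSqZeroExt (MonoidAlgebra F (V8n n)) (MonoidAlgebra F (V8n n)))ˣ := PresentedGroup.toGroup (f := f) hf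
  have φa : φ (aV n) = j (aV n) * U := PresentedGroup.toGroup.of hf
  have φb : φ (bV n) = j (bV n) := PresentedGroup.toGroup.of hf
  let Φ : (MonoidAlgebra F (V8n n)) →ₐ[F] (TrivSqZeroExt (MonoidAlgebra F (V8n n)) (MonoidAlgebra F (V8n n))) := MonoidAlgebra.lift F (TrivSqZeroExt (MonoidAlgebra F (V8n n)) (MonoidAlgebra F (V8n n))) (V8n n) ((Units.coeHom (TrivSqZeroExt (MonoidAlgebra F (V8n n)) (MonoidAlgebra F (V8n n)))).comp φ)
  have hΦ : ∀ g, Φ (o g) = (φ g : (TrivSqZeroExt (MonoidAlgebra F (V8n n)) (MonoidAlgebra F (V8n n)))) := fun g => by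
    simp [Φ, o]
  have hfstg : ∀ g, (φ g : TrivSqZeroExt (MonoidAlgebra F (V8n n))
      (MonoidAlgebra F (V8n n))).fst = o g := by
    have : (Units.map (TrivSqZeroExt.fstHom F (MonoidAlgebra F (V8n n))
        (MonoidAlgebra F (V8n n)) :
        TrivSqZeroExt (MonoidAlgebra F (V8n n)) (MonoidAlgebra F (V8n n)) →*
          MonoidAlgebra F (V8n n))).comp φ
        = (Units.map o).comp toUnits.toMonoidHom := by
      apply PresentedGroup.ext
      intro x
      ext1
      fin_cases x
      · change (φ (aV n)).val.fst = o (aV n)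
        rw [φa]; simp [jv, Uv]
      · change (φ (bV n)).val.fst = o (bV n)
        rw [φb]; simp [jv]
    intro g
    exact congrArg Units.val (DFunLike.congr_fun this g)
  have hfst : ∀ x, (Φ x).fst = x := by
    have : (TrivSqZeroExt.fstHom F (MonoidAlgebra F (V8n n)) (MonoidAlgebra F (V8n n))).comp Φ = AlgHom.id F (MonoidAlgebra F (V8n n)) := by
      apply MonoidAlgebra.algHom_ext' _ (Subsingleton.elim _ _)
      ext g : 1
      have := hfstg g
      rw [← hΦ] at this
      exact this
    intro x
    exact DFunLike.congr_fun this x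
  refine ⟨fun x => (Φ x).snd, fun x y => by simp, fun x y => ?_, ?_⟩
  · simp only [map_mul, TrivSqZeroExt.snd_mul, hfst, smul_eq_mul, op_smul_eq_mul]
    exact add_comm _ _
  rintro ⟨β, hβ⟩
  -- the trace functional
  have hn3 : 3 ≤ n := by
    have h2 := hp.two_le
    have : p ≠ 2 := by rintro rfl; exact absurd hodd (by decide)
    have := Nat.le_of_dvd hn hdvd
    omega
  let g : Fin 2 → DihedralGroup n := ![DihedralGroup.r 1, DihedralGroup.sr 0]
  have hg : ∀ r ∈ V8nRels n, FreeGroup.lift g r = 1 := by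
    rintro r (rfl | rfl | rfl | rfl)
    · simp [g]
    · simp [g, pow_succ]
    · simp [g, pow_succ]
    · simp [g, pow_succ]
  let ψ : V8n n →* DihedralGroup n := PresentedGroup.toGroup (f := g) hg
  have ψa : ψ (aV n) = DihedralGroup.r 1 := PresentedGroup.toGroup.of hg
  have ψb : ψ (bV n) = DihedralGroup.sr 0 := PresentedGroup.toGroup.of hg
  have ha := congrArg (MonoidAlgebra.mapDomainRingHom F ψ) (hβ (o (aV n)))
  have hda : (Φ (o (aV n))).snd = o (aV n ^ 2) - o (bV n ^ 2) := by
    rw [hΦ, φa, Units.val_mul, jv, Uv]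
    simp only [w, mul_add, mul_one, TrivSqZeroExt.inl_mul_inr, TrivSqZeroExt.snd_add,
      TrivSqZeroExt.snd_inl, TrivSqZeroExt.snd_inr, zero_add, smul_eq_mul, mul_sub, ← map_mul,
      mul_inv_cancel_left]
    rw [pow_two (aV n)]
  have hM : ∀ g, MonoidAlgebra.mapDomainRingHom F ψ (o g) = MonoidAlgebra.single (ψ g) 1 := by
    intro g; simp [o]
  simp only [hda, map_sub, map_mul, hM] at ha
  have h1 := congrArg (fun x => x.coeff 1) ha
  have e1 : ψ (bV n ^ 2) = 1 := by
    rw [map_pow, ψb]; simp [pow_succ]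
  have e2 : ψ (aV n ^ 2) ≠ 1 := by
    rw [map_pow, ψa, DihedralGroup.one_def]
    intro h
    simp only [DihedralGroup.r_one_pow, DihedralGroup.r.injEq] at h
    rw [ZMod.natCast_eq_zero_iff] at h
    have := Nat.le_of_dvd (by norm_num) h
    omega
  rw [e1] at h1
  generalize ψ (aV n ^ 2) = q at h1 e2
  simp [Finsupp.single_eq_of_ne' e2, MonoidAlgebra.coeff_single_mul_apply, MonoidAlgebra.coeff_mul_single_apply] at h1
end

section
/- Let F be a field with char(F) ≠ 2, let G be a finite group, and let g ∈ G be an element of order n. If C̄(g) ≠ {0} and C̄(g^{-1}) = C̄(g), then n is even. -/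
/-- The anti-centralizer `C̄(β) = {α ∣ α * β = -(β * α)}` of an element `β` of an
`F`-algebra `A`, as an `F`-subspace of `A`. -/
def antiCentralizer (F : Type*) [CommSemiring F] {A : Type*} [Ring A] [Algebra F A]
    (β : A) : Submodule F A where
  carrier := {α | α * β = -(β * α)}
  zero_mem' := by simp
  add_mem' := by
    intro x y hx hy
    simp only [Set.mem_setOf_eq] at *
    rw [add_mul, mul_add, hx, hy, neg_add]
  smul_mem' := by
    intro c x hx
    simp only [Set.mem_setOf_eq] at *
    rw [smul_mul_assoc, hx, mul_smul_comm, smul_neg]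

/-- Let `F` be a field with `char F ≠ 2`, `G` a finite group and
`g ∈ G` an element of order `n`. If `C̄(g) ≠ {0}` and `C̄(g⁻¹) = C̄(g)` in the group
algebra `FG`, then `n` is even. -/
theorem even_orderOf_of_antiCentralizer_inv_eq
    (F : Type*) [Field F] (hF : ringChar F ≠ 2)
    (G : Type*) [Group G] [Finite G] (g : G) (n : ℕ) (hord : orderOf g = n)
    (hne : antiCentralizer F (MonoidAlgebra.of F G g) ≠ ⊥)
    (heq : antiCentralizer F (MonoidAlgebra.of F G g⁻¹) =
      antiCentralizer F (MonoidAlgebra.of F G g)) :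
    Even n := by
  by_contra hn
  rw [Nat.not_even_iff_odd] at hn
  apply hne
  rw [Submodule.eq_bot_iff]
  intro x hx
  have hx' : x * MonoidAlgebra.of F G g = -(MonoidAlgebra.of F G g * x) := hx
  have hs : SemiconjBy x (MonoidAlgebra.of F G g) (-(MonoidAlgebra.of F G g)) := by
    unfold SemiconjBy
    rw [hx', neg_mul]
  have hp := hs.pow_right n
  rw [hn.neg_pow, ← map_pow, ← hord, pow_orderOf_eq_one, map_one] at hp
  unfold SemiconjBy at hp
  rw [mul_one, neg_mul, one_mul] at hp
  have h2 : (2 : F) • x = 0 := by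
    rw [two_smul]
    exact eq_neg_iff_add_eq_zero.mp hp
  exact (smul_eq_zero.mp h2).resolve_left (Ring.two_ne_zero hF)
end
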